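/- Fix real exponents p > q > 1. Under the bilevel ensemble(n,p,q), let f̂ be the function learned by minimum-Σ-weighted-ℓ2-norm interpolation of constant labels 1 at the n regularly spaced points x_i = −1 + 2i/n, and let h(B,n) = (B−1+n)/2. Then there is a constant C' > 0 depending only on (p,q) such that for all n ≥ 2, the adversarial classification risk at radius 2π/h(B,n) satisfies C_adv(f̂, 2π/h(B,n)) ≤ min{1, C'·n^{q−p}}. -/

import Mathlib

open MeasureTheory

/-- The lifted Fourier feature map `φ : ℝ → ℝ^B`,
`φ(x) = (1/√2, sin (π x), cos (π x), …, sin (((B-1)/2) π x), cos (((B-1)/2) π x))`. -/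
noncomputable def phiF (B : ℕ) (x : ℝ) : Fin B → ℝ := fun j =>
  if j.val = 0 then 1 / Real.sqrt 2
  else if j.val % 2 = 1 then Real.sin ((((j.val + 1) / 2 : ℕ) : ℝ) * Real.pi * x)
  else Real.cos (((j.val / 2 : ℕ) : ℝ) * Real.pi * x)

/-- The `n` regularly spaced training points `x_i = -1 + 2 i / n`, `i = 1, …, n`. -/
noncomputable def xtr (n : ℕ) (i : Fin n) : ℝ := -1 + 2 * ((i : ℕ) + 1 : ℝ) / (n : ℝ)

/-- `α` interpolates the constant labels `1` at the regular grid: `Φ α = (1, …, 1)`. -/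
def Interpolates (n B : ℕ) (α : Fin B → ℝ) : Prop :=
  ∀ i : Fin n, ∑ j, α j * phiF B (xtr n i) j = 1

/-- The bilevel diagonal weights: `λ₁ = γ B` with `γ = n^{-q}` on the constant feature,
and `λ_L = (1 - γ) B / (B - 1)` on all other features. -/
noncomputable def bilevelLam (n B : ℕ) (q : ℝ) : Fin B → ℝ := fun j =>
  if j.val = 0 then (n : ℝ) ^ (-q) * (B : ℝ)
  else (1 - (n : ℝ) ^ (-q)) * (B : ℝ) / ((B : ℝ) - 1)

/-- `α̂` is a minimum-`Σ`-weighted-`ℓ₂`-norm interpolator. -/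
def IsMinInterp (n B : ℕ) (lam : Fin B → ℝ) (α : Fin B → ℝ) : Prop :=
  Interpolates n B α ∧
    ∀ α' : Fin B → ℝ, Interpolates n B α' →
      ∑ j, (α j) ^ 2 / lam j ≤ ∑ j, (α' j) ^ 2 / lam j

/-- `B` is the odd integer closest to `n^p` with `2n ∣ B - 1`. -/
def BilevelB (n B : ℕ) (p : ℝ) : Prop :=
  Odd B ∧ 2 * n ∣ B - 1 ∧ |(B : ℝ) - (n : ℝ) ^ p| ≤ (n : ℝ)

/-- `h(B,n) = (B - 1 + n)/2`. -/
noncomputable def hBn (n B : ℕ) : ℝ := ((B : ℝ) - 1 + (n : ℝ)) / 2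

/-- The adversarial classification risk of `f` at radius `ε` against the constant `+1`
ground truth: `C_adv(f, ε) = (1/2) · Leb {x ∈ [-1,1] : ∃ x̃, |x̃ - x| ≤ ε ∧ f(x̃) ≤ 0}`. -/
noncomputable def advRisk (f : ℝ → ℝ) (ε : ℝ) : ℝ :=
  (volume {x ∈ Set.Icc (-1 : ℝ) 1 | ∃ y : ℝ, |y - x| ≤ ε ∧ f y ≤ 0}).toReal / 2


lemma aux_sum_pair (g : ℕ → ℝ) (K : ℕ) :
    ∑ j ∈ Finset.range (2 * K + 1), g j =
      g 0 + ∑ k ∈ Finset.range K, (g (2 * k + 1) + g (2 * k + 2)) := by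
  induction K with
  | zero => simp
  | succ K ih =>
    rw [show 2 * (K + 1) + 1 = (2 * K + 1) + 1 + 1 by ring, Finset.sum_range_succ,
      Finset.sum_range_succ, ih, Finset.sum_range_succ (n := K)]
    ring

lemma aux_sum_mult (n : ℕ) (hn : 0 < n) (c : ℕ → ℝ) (m : ℕ) :
    ∑ k ∈ Finset.range (n * m), (if n ∣ k + 1 then c (k + 1) else 0) =
      ∑ l ∈ Finset.range m, c (n * (l + 1)) := by
  induction m with
  | zero => simp
  | succ m ih =>
    rw [Finset.sum_range_succ, ← ih, mul_add, mul_one, Finset.sum_range_add]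
    congr 1
    rw [Finset.sum_eq_single (n - 1)]
    · have : n * m + (n - 1) + 1 = n * m + n := by omega
      rw [this, if_pos]
      exact ⟨m + 1, by ring⟩
    · intro r hr hne
      rw [if_neg]
      intro hd
      have hr' := Finset.mem_range.1 hr
      have : n ∣ r + 1 := by
        rw [add_assoc] at hd
        exact (Nat.dvd_add_right (dvd_mul_right n m)).1 hd
      have := Nat.le_of_dvd (by omega) this
      omega
    · intro h
      exact absurd (Finset.mem_range.2 (by omega)) h

lemma aux_tele (a b : ℝ) (n : ℕ) :
    2 * Real.sin b * ∑ i ∈ Finset.range n, Real.cos (a - 2 * b * ((i : ℝ) + 1)) =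
      Real.sin (a - b) - Real.sin (a - b - 2 * b * n) := by
  induction n with
  | zero => simp
  | succ n ih =>
    rw [Finset.sum_range_succ, mul_add, ih]
    push_cast
    have h1 : a - b - 2 * b * n = (a - 2 * b * ((n : ℝ) + 1)) + b := by ring
    have h2 : a - b - 2 * b * ((n : ℝ) + 1) = (a - 2 * b * ((n : ℝ) + 1)) - b := by ring
    rw [h1, h2, Real.sin_add, Real.sin_sub (a - 2 * b * ((n : ℝ) + 1)) b]
    ring

lemma aux_grid (n k : ℕ) (hn : 0 < n) (x : ℝ) :
    ∑ i : Fin n, Real.cos ((k : ℝ) * Real.pi * (x - xtr n i)) =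
      if n ∣ k then (n : ℝ) * Real.cos ((k : ℝ) * Real.pi * (x + 1)) else 0 := by
  have hn' : (n : ℝ) ≠ 0 := by positivity
  have hrew : ∀ i : Fin n, Real.cos ((k : ℝ) * Real.pi * (x - xtr n i)) =
      Real.cos ((k : ℝ) * Real.pi * (x + 1) - 2 * (k * Real.pi / n) * (((i : ℕ) : ℝ) + 1)) := by
    intro i
    unfold xtr
    congr 1
    field_simp
    ring
  simp_rw [hrew]
  rw [Fin.sum_univ_eq_sum_range (fun i : ℕ =>
    Real.cos ((k : ℝ) * Real.pi * (x + 1) - 2 * (k * Real.pi / n) * ((i : ℝ) + 1))) n]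
  split_ifs with hd
  · obtain ⟨l, rfl⟩ := hd
    rw [Finset.sum_congr rfl (g := fun _ => Real.cos (((n * l : ℕ) : ℝ) * Real.pi * (x + 1)))]
    · simp
    · intro i _
      have : 2 * (((n * l : ℕ) : ℝ) * Real.pi / n) * ((i : ℝ) + 1) =
          ((l * (i + 1) : ℕ) : ℝ) * (2 * Real.pi) := by
        push_cast
        field_simp
      rw [this, Real.cos_sub_nat_mul_two_pi]
  · have h := aux_tele ((k : ℝ) * Real.pi * (x + 1)) (k * Real.pi / n) n
    have h2 : 2 * ((k : ℝ) * Real.pi / n) * n = (k : ℝ) * (2 * Real.pi) := by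
      field_simp
    rw [h2, Real.sin_sub_nat_mul_two_pi, sub_self] at h
    have hs : Real.sin ((k : ℝ) * Real.pi / n) ≠ 0 := by
      intro h0
      obtain ⟨z, hz⟩ := Real.sin_eq_zero_iff.1 h0
      have hz' : (z : ℝ) * n = k := by
        field_simp at hz
        nlinarith [Real.pi_pos]
      apply hd
      have : (z * (n : ℤ)) = (k : ℤ) := by exact_mod_cast hz'
      exact Int.natCast_dvd_natCast.1 ⟨z, by rw [← this]; ring⟩
    rcases mul_eq_zero.1 h with h | h
    · exact absurd (by linarith) hs
    · exact h

lemma aux_kernel (n K : ℕ) (q : ℝ) (x y : ℝ) :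
    ∑ j, bilevelLam n (2 * K + 1) q j * phiF (2 * K + 1) y j * phiF (2 * K + 1) x j =
      ((n : ℝ) ^ (-q) * ((2 * K + 1 : ℕ) : ℝ)) / 2 +
      ((1 - (n : ℝ) ^ (-q)) * ((2 * K + 1 : ℕ) : ℝ) / (((2 * K + 1 : ℕ) : ℝ) - 1)) *
        ∑ k ∈ Finset.range K, Real.cos (((k + 1 : ℕ) : ℝ) * Real.pi * (x - y)) := by
  unfold bilevelLam phiF
  rw [Fin.sum_univ_eq_sum_range (fun j : ℕ => (if j = 0 then (n : ℝ) ^ (-q) * ((2 * K + 1 : ℕ) : ℝ)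
    else (1 - (n : ℝ) ^ (-q)) * ((2 * K + 1 : ℕ) : ℝ) / (((2 * K + 1 : ℕ) : ℝ) - 1)) *
    (if j = 0 then 1 / Real.sqrt 2
      else if j % 2 = 1 then Real.sin ((((j + 1) / 2 : ℕ) : ℝ) * Real.pi * y)
      else Real.cos (((j / 2 : ℕ) : ℝ) * Real.pi * y)) *
    (if j = 0 then 1 / Real.sqrt 2
      else if j % 2 = 1 then Real.sin ((((j + 1) / 2 : ℕ) : ℝ) * Real.pi * x)
      else Real.cos (((j / 2 : ℕ) : ℝ) * Real.pi * x))) (2 * K + 1), aux_sum_pair]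
  have hsq : (1 / Real.sqrt 2) * (1 / Real.sqrt 2) = 1 / 2 := by
    rw [div_mul_div_comm, Real.mul_self_sqrt (by norm_num)]
    norm_num
  congr 1
  · simp only [if_true]
    rw [mul_assoc, hsq]
    ring
  · rw [Finset.mul_sum]
    refine Finset.sum_congr rfl fun k _ => ?_
    have e1 : (2 * k + 1) % 2 = 1 := by omega
    have e2 : ¬ (2 * k + 2) % 2 = 1 := by omega
    have e3 : (2 * k + 1 + 1) / 2 = k + 1 := by omega
    have e5 : ¬ (2 * k + 1 = 0) := by omega
    have e6 : ¬ (2 * k + 2 = 0) := by omega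
    rw [if_neg e5, if_neg e5, if_neg e5, if_neg e6, if_neg e6, if_neg e6, if_pos e1, if_pos e1,
      if_neg e2, if_neg e2, e3, mul_sub, Real.cos_sub]
    ring

/-- The minimiser is a multiple of the kernel sum. -/
lemma aux_min (n B : ℕ) (lam : Fin B → ℝ) (hlam : ∀ j, 0 < lam j) (w : ℝ)
    (hint : Interpolates n B (fun j => w * ∑ i, lam j * phiF B (xtr n i) j))
    (α : Fin B → ℝ) (hα : IsMinInterp n B lam α) :
    α = fun j => w * ∑ i, lam j * phiF B (xtr n i) j := by
  set β : Fin B → ℝ := fun j => w * ∑ i, lam j * phiF B (xtr n i) j with hβ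
  have hmin := hα.2 β hint
  have horth : ∑ j, (α j - β j) * β j / lam j = 0 := by
    have h1 : ∀ j, (α j - β j) * β j / lam j =
        ∑ i, w * (α j * phiF B (xtr n i) j - β j * phiF B (xtr n i) j) := by
      intro j
      have hl := (hlam j).ne'
      have : β j / lam j = w * ∑ i, phiF B (xtr n i) j := by
        simp only [hβ]
        rw [← Finset.mul_sum]
        field_simp
      rw [mul_div_assoc, this, Finset.mul_sum, Finset.mul_sum]
      refine Finset.sum_congr rfl fun i _ => ?_
      ring
    simp_rw [h1]
    rw [Finset.sum_comm]
    refine Finset.sum_eq_zero fun i _ => ?_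
    rw [← Finset.mul_sum, Finset.sum_sub_distrib, hα.1 i, hint i]
    ring
  have hdec : ∑ j, (α j) ^ 2 / lam j = ∑ j, (β j) ^ 2 / lam j +
      2 * ∑ j, (α j - β j) * β j / lam j + ∑ j, (α j - β j) ^ 2 / lam j := by
    rw [Finset.mul_sum, ← Finset.sum_add_distrib, ← Finset.sum_add_distrib]
    refine Finset.sum_congr rfl fun j _ => ?_
    ring
  have hle : ∑ j, (α j - β j) ^ 2 / lam j ≤ 0 := by
    rw [horth] at hdec
    linarith
  have hnn : ∀ j ∈ Finset.univ, 0 ≤ (α j - β j) ^ 2 / lam j := fun j _ =>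
    div_nonneg (sq_nonneg _) (hlam j).le
  have h0 := (Finset.sum_eq_zero_iff_of_nonneg hnn).1 (le_antisymm hle (Finset.sum_nonneg hnn))
  funext j
  have := h0 j (Finset.mem_univ j)
  rcases div_eq_zero_iff.1 this with h | h
  · have := pow_eq_zero_iff (two_ne_zero) |>.1 h
    linarith
  · exact absurd h (hlam j).ne'

lemma aux_dirichlet (θ : ℝ) (m : ℕ) :
    2 * Real.sin (θ / 2) * ∑ l ∈ Finset.range m, Real.cos (((l : ℝ) + 1) * θ) =
      Real.sin (m * θ + θ / 2) - Real.sin (θ / 2) := by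
  induction m with
  | zero => simp
  | succ m ih =>
    rw [Finset.sum_range_succ, mul_add, ih]
    push_cast
    have h1 : m * θ + θ / 2 = (((m : ℝ) + 1) * θ) - θ / 2 := by ring
    rw [h1, Real.sin_sub (((m : ℝ) + 1) * θ), Real.sin_add (((m : ℝ) + 1) * θ)]
    ring

lemma aux_dirichlet_lower (θ : ℝ) (m : ℕ) :
    -1 ≤ |Real.sin (θ / 2)| * ∑ l ∈ Finset.range m, Real.cos (((l : ℝ) + 1) * θ) := by
  have h := aux_dirichlet θ m
  set S := ∑ l ∈ Finset.range m, Real.cos (((l : ℝ) + 1) * θ)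
  have a1 := Real.neg_one_le_sin (m * θ + θ / 2)
  have a2 := Real.sin_le_one (m * θ + θ / 2)
  have a3 := Real.neg_one_le_sin (θ / 2)
  have a4 := Real.sin_le_one (θ / 2)
  rcases abs_cases (Real.sin (θ / 2)) with ⟨h1, _⟩ | ⟨h1, _⟩ <;> rw [h1] <;> linarith

lemma aux_volume (n : ℕ) (hn : 0 < n) (η : ℝ) (hη : 0 ≤ η) :
    volume {x ∈ Set.Icc (-1 : ℝ) 1 | |Real.sin (n * Real.pi * (x + 1) / 2)| ≤ η} ≤
      ENNReal.ofReal (4 * η) := by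
  have hn' : (0 : ℝ) < n := by positivity
  have hsub : {x ∈ Set.Icc (-1 : ℝ) 1 | |Real.sin (n * Real.pi * (x + 1) / 2)| ≤ η} ⊆
      ⋃ k ∈ Finset.range (n + 1), Set.Icc (2 * (k : ℝ) / n - 1 - η / n)
        (2 * (k : ℝ) / n - 1 + η / n) := by
    rintro x ⟨⟨hx1, hx2⟩, hx⟩
    set t : ℝ := n * (x + 1) / 2 with ht
    have ht0 : 0 ≤ t := by
      have : 0 ≤ x + 1 := by linarith
      positivity
    have htn : t ≤ n := by
      rw [ht]; nlinarith
    have hr := abs_sub_round t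
    have hr0 : 0 ≤ round t := by
      have : (-1 : ℝ) < round t := by
        have := (abs_le.1 hr).2
        linarith
      have : (-1 : ℤ) < round t := by exact_mod_cast this
      omega
    obtain ⟨k, hk⟩ := Int.eq_ofNat_of_zero_le hr0
    have hkR : ((round t : ℤ) : ℝ) = k := by rw [hk]; simp
    have hkn : k < n + 1 := by
      have : (k : ℝ) < n + 1 := by
        have := (abs_le.1 hr).1
        rw [hkR] at this
        linarith
      exact_mod_cast this
    rw [hkR] at hr
    have hsin : |Real.sin (Real.pi * (t - k))| ≤ η := by
      have e : Real.pi * (t - k) = n * Real.pi * (x + 1) / 2 - (k : ℕ) * Real.pi := by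
        rw [ht]; ring
      rw [e, Real.sin_sub_nat_mul_pi, abs_mul]
      simpa using hx
    have hb : |Real.pi * (t - k)| ≤ Real.pi / 2 := by
      rw [abs_mul, abs_of_pos Real.pi_pos]
      nlinarith [Real.pi_pos]
    have hm := Real.mul_abs_le_abs_sin hb
    rw [abs_mul, abs_of_pos Real.pi_pos] at hm
    have hm2 : 2 * |t - k| ≤ η := by
      have e : 2 / Real.pi * (Real.pi * |t - k|) = 2 * |t - k| := by
        field_simp
      linarith
    simp only [Set.mem_iUnion]
    refine ⟨k, Finset.mem_range.2 hkn, ?_⟩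
    have hxe : x = 2 * (k : ℝ) / n - 1 + 2 * (t - k) / n := by
      rw [ht]; field_simp; ring
    have h1 : 2 * (t - k) / n ≤ η / n := by
      have := le_abs_self (t - k)
      gcongr
      linarith
    have h2 : -(η / n) ≤ 2 * (t - k) / n := by
      rw [← neg_div]
      have := neg_abs_le (t - k)
      gcongr
      linarith
    constructor <;> linarith
  refine (measure_mono hsub).trans ((measure_biUnion_finset_le _ _).trans ?_)
  simp_rw [Real.volume_Icc]
  have e : ∀ k : ℕ, (2 * (k : ℝ) / n - 1 + η / n) - (2 * (k : ℝ) / n - 1 - η / n) = 2 * η / n := by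
    intro k; ring
  simp_rw [e]
  rw [Finset.sum_const, Finset.card_range, ← ENNReal.ofReal_nsmul]
  apply ENNReal.ofReal_le_ofReal
  rw [nsmul_eq_mul, mul_div_assoc', div_le_iff₀ hn']
  have : (1 : ℝ) ≤ n := by exact_mod_cast hn
  push_cast
  nlinarith

/-- Where the learned function is nonpositive, the sine is small. -/
lemma aux_nonpos (n m : ℕ) (hn : 2 ≤ n) (hm : 0 < m) (q : ℝ) (hq : 1 < q)
    (B : ℕ) (hB : B = 2 * (n * m) + 1) (α : Fin B → ℝ)
    (hα : IsMinInterp n B (bilevelLam n B q) α) (y : ℝ)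
    (hy : ∑ j, α j * phiF B y j ≤ 0) :
    |Real.sin (n * Real.pi * (y + 1) / 2)| ≤ 2 * (n : ℝ) ^ q / (2 * (n * m : ℝ)) := by
  have hnR : (2 : ℝ) ≤ n := by exact_mod_cast hn
  have hn0 : (0 : ℝ) < n := by linarith
  have hmR : (0 : ℝ) < m := by exact_mod_cast hm
  have hγ0 : 0 < (n : ℝ) ^ (-q) := Real.rpow_pos_of_pos hn0 _
  have hγ1 : (n : ℝ) ^ (-q) < 1 := Real.rpow_lt_one_of_one_lt_of_neg (by linarith) (by linarith)
  have hBR : (B : ℝ) - 1 = 2 * (n * m : ℝ) := by rw [hB]; push_cast; ring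
  have hB1 : 0 < (B : ℝ) - 1 := by rw [hBR]; positivity
  set L1 : ℝ := (n : ℝ) ^ (-q) * (B : ℝ) with hL1
  set LL : ℝ := (1 - (n : ℝ) ^ (-q)) * (B : ℝ) / ((B : ℝ) - 1) with hLL
  have hL1p : 0 < L1 := mul_pos hγ0 (by linarith)
  have hLLp : 0 < LL := div_pos (mul_pos (by linarith) (by linarith)) hB1
  have hlam : ∀ j, 0 < bilevelLam n B q j := by
    intro j
    unfold bilevelLam
    split_ifs
    · exact hL1p
    · exact hLLp
  have hF : ∀ (w x : ℝ), ∑ j, (w * ∑ i, bilevelLam n B q j * phiF B (xtr n i) j) * phiF B x j =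
      w * n * (L1 / 2 + LL * ∑ l ∈ Finset.range m, Real.cos (((l : ℝ) + 1) *
        (n * Real.pi * (x + 1)))) := by
    intro w x
    have h1 : ∑ j, (w * ∑ i, bilevelLam n B q j * phiF B (xtr n i) j) * phiF B x j =
        w * ∑ i, ∑ j, bilevelLam n B q j * phiF B (xtr n i) j * phiF B x j := by
      rw [Finset.sum_comm, Finset.mul_sum]
      refine Finset.sum_congr rfl fun j _ => ?_
      rw [mul_assoc, Finset.sum_mul]
    rw [h1]
    have h2 : ∀ i : Fin n, ∑ j, bilevelLam n B q j * phiF B (xtr n i) j * phiF B x j =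
        L1 / 2 + LL * ∑ k ∈ Finset.range (n * m),
          Real.cos (((k + 1 : ℕ) : ℝ) * Real.pi * (x - xtr n i)) := by
      intro i
      rw [hL1, hLL]
      clear_value L1 LL
      clear h1 hL1 hLL hy hα
      subst hB
      exact aux_kernel n (n * m) q x (xtr n i)
    simp_rw [h2]
    rw [Finset.sum_add_distrib, ← Finset.mul_sum, Finset.sum_comm]
    simp_rw [aux_grid n _ (by omega : 0 < n) x]
    rw [aux_sum_mult n (by omega) (fun k => (n : ℝ) * Real.cos ((k : ℝ) * Real.pi * (x + 1))) m,
      ← Finset.mul_sum]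
    have h3 : ∀ l : ℕ, Real.cos (((n * (l + 1) : ℕ) : ℝ) * Real.pi * (x + 1)) =
        Real.cos (((l : ℝ) + 1) * (n * Real.pi * (x + 1))) := by
      intro l
      congr 1
      push_cast
      ring
    simp_rw [h3]
    simp
    ring
  have hD : 0 < (n : ℝ) * (L1 / 2 + LL * m) := by positivity
  set w : ℝ := ((n : ℝ) * (L1 / 2 + LL * m))⁻¹ with hw
  have hwp : 0 < w := inv_pos.2 hD
  have hint : Interpolates n B (fun j => w * ∑ i, bilevelLam n B q j * phiF B (xtr n i) j) := by
    intro i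
    rw [hF w (xtr n i)]
    have h3 : ∀ l : ℕ, Real.cos (((l : ℝ) + 1) * (n * Real.pi * (xtr n i + 1))) = 1 := by
      intro l
      have : ((l : ℝ) + 1) * (n * Real.pi * (xtr n i + 1)) =
          (((l + 1) * (i + 1) : ℕ) : ℝ) * (2 * Real.pi) := by
        unfold xtr
        push_cast
        field_simp
        ring
      rw [this, Real.cos_nat_mul_two_pi]
    simp_rw [h3]
    rw [Finset.sum_const, Finset.card_range, nsmul_eq_mul, mul_one, mul_assoc]
    exact inv_mul_cancel₀ hD.ne'
  have hαe := aux_min n B _ hlam w hint α hα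
  rw [hαe, hF w y] at hy
  have hle : L1 / 2 + LL * ∑ l ∈ Finset.range m, Real.cos (((l : ℝ) + 1) *
        (n * Real.pi * (y + 1))) ≤ 0 := by
    by_contra hcon
    push Not at hcon
    have := mul_pos (mul_pos hwp hn0) hcon
    linarith
  have hlow := aux_dirichlet_lower (n * Real.pi * (y + 1)) m
  set S := ∑ l ∈ Finset.range m, Real.cos (((l : ℝ) + 1) * (n * Real.pi * (y + 1)))
  set s := |Real.sin (n * Real.pi * (y + 1) / 2)|
  have hs : 0 ≤ s := abs_nonneg _
  have hs1 : s * (L1 / 2) ≤ LL := by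
    have h1 := mul_le_mul_of_nonneg_left hle hs
    have h2 := mul_le_mul_of_nonneg_left hlow hLLp.le
    nlinarith
  rw [← hBR, le_div_iff₀ hB1]
  have hinv : (n : ℝ) ^ (-q) * (n : ℝ) ^ q = 1 := by
    rw [← Real.rpow_add hn0]; simp
  have hBp : (0 : ℝ) < B := by linarith
  have hs2 : s * ((n : ℝ) ^ (-q) * (B : ℝ) / 2) * ((B : ℝ) - 1) ≤
      (1 - (n : ℝ) ^ (-q)) * (B : ℝ) := (le_div_iff₀ hB1).1 hs1
  have hs3 : s * (n : ℝ) ^ (-q) * ((B : ℝ) - 1) ≤ 2 := by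
    have : (s * (n : ℝ) ^ (-q) * ((B : ℝ) - 1)) * B ≤ 2 * B := by nlinarith
    exact le_of_mul_le_mul_right this hBp
  have hnq : 0 < (n : ℝ) ^ q := Real.rpow_pos_of_pos hn0 _
  calc s * ((B : ℝ) - 1) = (s * (n : ℝ) ^ (-q) * ((B : ℝ) - 1)) * (n : ℝ) ^ q := by
        linear_combination (-(s * ((B : ℝ) - 1))) * hinv
    _ ≤ 2 * (n : ℝ) ^ q := mul_le_mul_of_nonneg_right hs3 hnq.le

/-- **Adversarial risk at radius `2π/h(B,n)` in the bilevel ensemble.**  Fix `p > q > 1`.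
There is a constant `C' > 0` depending only on `(p, q)` such that for all `n ≥ 2`, the
minimum-`Σ`-weighted-`ℓ₂`-norm interpolator `f̂` of constant labels at the `n` regularly
spaced points satisfies `C_adv(f̂, 2π/h(B,n)) ≤ min 1 (C' n^{q-p})`. -/
theorem stmt_7 (p q : ℝ) (hq : 1 < q) (hpq : q < p) :
    ∃ C' : ℝ, 0 < C' ∧ ∀ n : ℕ, 2 ≤ n → ∀ B : ℕ, BilevelB n B p →
      ∀ αhat : Fin B → ℝ, IsMinInterp n B (bilevelLam n B q) αhat →
        advRisk (fun x => ∑ j, αhat j * phiF B x j) (2 * Real.pi / hBn n B) ≤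
          min 1 (C' * (n : ℝ) ^ (q - p)) := by
  have hπ := Real.pi_pos
  refine ⟨2 * (4 + 4 * Real.pi ^ 2), by positivity, ?_⟩
  intro n hn B hB α hα
  have hnR : (2 : ℝ) ≤ n := by exact_mod_cast hn
  have hn0 : (0 : ℝ) < n := by linarith
  set f : ℝ → ℝ := fun x => ∑ j, α j * phiF B x j with hf
  have hone : advRisk f (2 * Real.pi / hBn n B) ≤ 1 := by
    unfold advRisk
    have h1 : volume {x ∈ Set.Icc (-1 : ℝ) 1 | ∃ y : ℝ, |y - x| ≤ 2 * Real.pi / hBn n B ∧ f y ≤ 0}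
        ≤ ENNReal.ofReal 2 := by
      refine (measure_mono (Set.sep_subset _ _)).trans ?_
      rw [Real.volume_Icc]
      norm_num
    have := ENNReal.toReal_le_of_le_ofReal (by norm_num) h1
    linarith
  refine le_min hone ?_
  have hqp : (n : ℝ) ^ (1 - p) ≤ (n : ℝ) ^ (q - p) :=
    Real.rpow_le_rpow_of_exponent_le (by linarith) (by linarith)
  have hX : 0 < (n : ℝ) ^ (q - p) := Real.rpow_pos_of_pos hn0 _
  have hP : 0 < (n : ℝ) ^ p := Real.rpow_pos_of_pos hn0 _
  have h1p : (n : ℝ) ^ (1 - p) = n / (n : ℝ) ^ p := by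
    rw [Real.rpow_sub hn0, Real.rpow_one]
  have hqpe : (n : ℝ) ^ (q - p) = (n : ℝ) ^ q / (n : ℝ) ^ p := Real.rpow_sub hn0 _ _
  by_cases hsmall : (n : ℝ) ^ p < 4 * n
  · have h4 : 1 / 4 < (n : ℝ) ^ (1 - p) := by
      rw [h1p, lt_div_iff₀ hP]; linarith
    nlinarith [sq_nonneg Real.pi]
  push Not at hsmall
  obtain ⟨⟨K, hK⟩, ⟨m, hm⟩, habs⟩ := hB
  have hBeq : B = 2 * (n * m) + 1 := by
    have : 2 * n * m = 2 * (n * m) := by ring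
    omega
  have hBlow : (n : ℝ) ^ p / 2 ≤ (B : ℝ) - 1 := by
    have := (abs_le.1 habs).1
    linarith
  have hBR : (B : ℝ) - 1 = 2 * (n * m : ℝ) := by rw [hBeq]; push_cast; ring
  have hmp : 0 < m := by
    rcases Nat.eq_zero_or_pos m with h | h
    · subst h
      simp at hBR
      linarith
    · exact h
  have hδ : ∀ y, f y ≤ 0 → |Real.sin (n * Real.pi * (y + 1) / 2)| ≤ 4 * (n : ℝ) ^ (q - p) := by
    intro y hy
    refine (aux_nonpos n m hn hmp q hq B hBeq α hα y hy).trans ?_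
    rw [← hBR, hqpe]
    have hnq : 0 < (n : ℝ) ^ q := Real.rpow_pos_of_pos hn0 _
    calc 2 * (n : ℝ) ^ q / ((B : ℝ) - 1) ≤
        2 * (n : ℝ) ^ q / ((n : ℝ) ^ p / 2) := by gcongr
      _ = _ := by field_simp; ring
  have hε : 2 * Real.pi / hBn n B ≤ 8 * Real.pi / (n : ℝ) ^ p := by
    have hh : (n : ℝ) ^ p / 4 ≤ hBn n B := by
      unfold hBn; linarith
    calc 2 * Real.pi / hBn n B ≤ 2 * Real.pi / ((n : ℝ) ^ p / 4) := by gcongr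
      _ = _ := by field_simp; ring
  set η : ℝ := (4 + 4 * Real.pi ^ 2) * (n : ℝ) ^ (q - p) with hη
  have hη0 : 0 ≤ η := by positivity
  have hsub : {x ∈ Set.Icc (-1 : ℝ) 1 | ∃ y : ℝ, |y - x| ≤ 2 * Real.pi / hBn n B ∧ f y ≤ 0} ⊆
      {x ∈ Set.Icc (-1 : ℝ) 1 | |Real.sin (n * Real.pi * (x + 1) / 2)| ≤ η} := by
    rintro x ⟨hx, y, hyx, hy⟩
    refine ⟨hx, ?_⟩
    have h1 := hδ y hy
    have h2 : |Real.sin (n * Real.pi * (x + 1) / 2) - Real.sin (n * Real.pi * (y + 1) / 2)| ≤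
        |n * Real.pi * (x + 1) / 2 - n * Real.pi * (y + 1) / 2| := by
      have := Real.lipschitzWith_sin.dist_le_mul (n * Real.pi * (x + 1) / 2)
        (n * Real.pi * (y + 1) / 2)
      simpa [Real.dist_eq] using this
    have h3 : |n * Real.pi * (x + 1) / 2 - n * Real.pi * (y + 1) / 2| =
        n * Real.pi / 2 * |y - x| := by
      rw [show n * Real.pi * (x + 1) / 2 - n * Real.pi * (y + 1) / 2 =
        -(n * Real.pi / 2 * (y - x)) by ring, abs_neg, abs_mul,
        abs_of_pos (by positivity : (0 : ℝ) < n * Real.pi / 2)]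
    have h4 : n * Real.pi / 2 * |y - x| ≤ 4 * Real.pi ^ 2 * (n : ℝ) ^ (1 - p) := by
      calc n * Real.pi / 2 * |y - x| ≤ n * Real.pi / 2 * (8 * Real.pi / (n : ℝ) ^ p) := by
            gcongr
            exact hyx.trans hε
        _ = _ := by rw [h1p]; field_simp; ring
    have h5 : 4 * Real.pi ^ 2 * (n : ℝ) ^ (1 - p) ≤ 4 * Real.pi ^ 2 * (n : ℝ) ^ (q - p) := by
      gcongr
    have h6 := abs_sub_abs_le_abs_sub (Real.sin (n * Real.pi * (x + 1) / 2))
      (Real.sin (n * Real.pi * (y + 1) / 2))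
    rw [hη]
    linarith
  have hvol := (measure_mono hsub).trans (aux_volume n (by omega) η hη0)
  have := ENNReal.toReal_le_of_le_ofReal (by positivity) hvol
  unfold advRisk
  rw [hη] at this
  linarith
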